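/- arXiv:1205.5468 — 2 statements merged into one kernel-verified Lean document; each statement's English description precedes it below -/
import Mathlib

section
/- Let f : ℝ → ℝ satisfy |f(x) − f(y)| ≤ Λ·|x − y| for all x, y, where Λ > 1, let x₀ be a fixed point of f, and let (c_k)_{k≥1} be a sequence with c_{k+1} = f(c_k) for all k ≥ 1. Let φ : ℝ → ℝ satisfy |φ(x) − φ(y)| ≤ L·|x − y| for all x, y, and suppose φ(x₀) = 1. Suppose δ > 0, m ≥ 1 are such that δ·Λ^m ≤ 1/2, and j₀ ≥ 1 is an index with |c_{j₀} − x₀| < δ. Then for every n with j₀ ≤ n ≤ j₀ + m one has |Σ_{k=1}^{n} φ(c_k)| ≥ (n − j₀ + 1) − L / (2·(1 − 1/Λ)) − |Σ_{k=1}^{j₀−1} φ(c_k)|. -/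
/-!
Two orbits of a `K`-Lipschitz map that start within `δ` of each other are within `δ * K ^ i` after
`i` steps. If `δ * K ^ m ≤ ε`, these bounds, read backwards from `i = m`, are at most
`ε, ε / K, ε / K ^ 2, …`, so up to that time the Birkhoff sums of a `C`-Lipschitz observable differ
by at most `C * ε / (1 - 1 / K)`, however large `m` is. The orbit of a fixed point where the
observable is `1` has the number of steps as its Birkhoff sum.
-/

open Finset Function

open scoped NNReal

theorem geom_sum_le_pow_div {R : Type*} [Field R] [LinearOrder R] [IsStrictOrderedRing R]
    {r : R} (hr : 1 < r) {m n : ℕ} (hn : n ≤ m + 1) :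
    ∑ i ∈ range n, r ^ i ≤ r ^ m / (1 - 1 / r) := by
  have hr₀ : 0 < r := one_pos.trans hr
  have : 0 < r - 1 := sub_pos.2 hr
  calc
    ∑ i ∈ range n, r ^ i = (r ^ n - 1) / (r - 1) := geom_sum_eq hr.ne' n
    _ ≤ r ^ n / (r - 1) := by gcongr; exact sub_le_self _ zero_le_one
    _ ≤ r ^ (m + 1) / (r - 1) := by gcongr; exact hr.le
    _ = r ^ m / (1 - 1 / r) := by
      rw [one_sub_div hr₀.ne', div_div_eq_mul_div, pow_succ]

section Orbit

variable {X : Type*} {f : X → X} {c : ℕ → X} {j : ℕ}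

theorem iterate_apply_eq_of_forall_succ_eq (hc : ∀ k, j ≤ k → c (k + 1) = f (c k)) (i : ℕ) :
    f^[i] (c j) = c (j + i) := by
  induction i with
  | zero => rfl
  | succ i ih => rw [iterate_succ_apply', ih, ← hc _ (j.le_add_right i), add_assoc]

theorem sum_Ico_eq_sum_Ico_add_birkhoffSum {M : Type*} [AddCommMonoid M]
    (hc : ∀ k, j ≤ k → c (k + 1) = f (c k)) (φ : X → M) {a n : ℕ} (haj : a ≤ j) (hjn : j ≤ n) :
    ∑ k ∈ Ico a n, φ (c k) = ∑ k ∈ Ico a j, φ (c k) + birkhoffSum f φ (n - j) (c j) := by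
  rw [← sum_Ico_consecutive _ haj hjn, sum_Ico_eq_sum_range _ j n]
  simp only [birkhoffSum, iterate_apply_eq_of_forall_succ_eq hc]

end Orbit

section Lipschitz

variable {X E : Type*} [PseudoMetricSpace X] [SeminormedAddCommGroup E]
  {f : X → X} {φ : X → E} {K C : ℝ≥0}

theorem dist_birkhoffSum_le_geom_sum (hf : LipschitzWith K f) (hφ : LipschitzWith C φ)
    (n : ℕ) (x y : X) :
    dist (birkhoffSum f φ n x) (birkhoffSum f φ n y) ≤
      C * ((∑ i ∈ range n, (K : ℝ) ^ i) * dist x y) :=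
  calc
    dist (birkhoffSum f φ n x) (birkhoffSum f φ n y)
      ≤ ∑ i ∈ range n, dist (φ (f^[i] x)) (φ (f^[i] y)) :=
        dist_sum_sum_le _ _ _
    _ ≤ ∑ i ∈ range n, C * ((K : ℝ) ^ i * dist x y) := by
      gcongr with i
      simpa [mul_assoc] using (hφ.comp (hf.iterate i)).dist_le_mul x y
    _ = C * ((∑ i ∈ range n, (K : ℝ) ^ i) * dist x y) := by rw [sum_mul, mul_sum]

theorem dist_birkhoffSum_le_of_mul_pow_le (hK : 1 < K) (hf : LipschitzWith K f)
    (hφ : LipschitzWith C φ) {x y : X} {δ ε : ℝ} {m n : ℕ} (hxy : dist x y ≤ δ)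
    (hδ : δ * (K : ℝ) ^ m ≤ ε) (hn : n ≤ m + 1) :
    dist (birkhoffSum f φ n x) (birkhoffSum f φ n y) ≤ C * ε / (1 - 1 / K) := by
  have hK' : (1 : ℝ) < K := mod_cast hK
  have hK₀ : 0 ≤ 1 - 1 / (K : ℝ) := by
    simpa only [one_div, sub_nonneg] using inv_le_one_of_one_le₀ hK'.le
  calc
    dist (birkhoffSum f φ n x) (birkhoffSum f φ n y)
      ≤ C * ((∑ i ∈ range n, (K : ℝ) ^ i) * dist x y) := dist_birkhoffSum_le_geom_sum hf hφ n x y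
    _ ≤ C * ((K : ℝ) ^ m / (1 - 1 / K) * δ) := by
      gcongr
      exact geom_sum_le_pow_div hK' hn
    _ = C * (δ * (K : ℝ) ^ m) / (1 - 1 / K) := by ring
    _ ≤ C * ε / (1 - 1 / K) := by gcongr

theorem stmt_2_general (hK : 1 < K) (hf : LipschitzWith K f) (hφ : LipschitzWith C φ)
    (x : X) {c : ℕ → X} {j : ℕ} (hc : ∀ k, j ≤ k → c (k + 1) = f (c k)) {δ ε : ℝ} {m : ℕ}
    (hclose : dist (c j) x ≤ δ) (hδ : δ * (K : ℝ) ^ m ≤ ε) {a n : ℕ} (haj : a ≤ j)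
    (hjn : j ≤ n) (hn : n ≤ j + m + 1) :
    ‖birkhoffSum f φ (n - j) x‖ - C * ε / (1 - 1 / K) - ‖∑ k ∈ Ico a j, φ (c k)‖ ≤
      ‖∑ k ∈ Ico a n, φ (c k)‖ := by
  set S := birkhoffSum f φ (n - j)
  have shadowing : ‖S (c j) - S x‖ ≤ C * ε / (1 - 1 / K) := by
    rw [← dist_eq_norm]
    exact dist_birkhoffSum_le_of_mul_pow_le hK hf hφ hclose hδ (by lia)
  have split := sum_Ico_eq_sum_Ico_add_birkhoffSum hc φ haj hjn
  have hS : ‖S x‖ ≤ ‖S (c j)‖ + ‖S (c j) - S x‖ := norm_le_insert _ _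
  have htail : ‖S (c j)‖ ≤ ‖∑ k ∈ Ico a n, φ (c k)‖ + ‖∑ k ∈ Ico a j, φ (c k)‖ := by
    simpa only [split, add_sub_cancel_left] using
      norm_sub_le (∑ k ∈ Ico a n, φ (c k)) (∑ k ∈ Ico a j, φ (c k))
  linarith

end Lipschitz

/-- Lower bound for a Birkhoff sum of `φ` along an orbit shadowing the fixed
point `x₀` where `φ x₀ = 1`. -/
theorem stmt_2 (f : ℝ → ℝ) (Λ : ℝ) (hΛ : 1 < Λ)
    (hf : ∀ x y : ℝ, |f x - f y| ≤ Λ * |x - y|)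
    (x₀ : ℝ) (hfix : f x₀ = x₀)
    (c : ℕ → ℝ) (hc : ∀ k, 1 ≤ k → c (k + 1) = f (c k))
    (φ : ℝ → ℝ) (L : ℝ) (hφ : ∀ x y : ℝ, |φ x - φ y| ≤ L * |x - y|)
    (hφx₀ : φ x₀ = 1)
    (δ : ℝ) (hδ : 0 < δ) (m : ℕ) (hm : 1 ≤ m) (hδm : δ * Λ ^ m ≤ 1 / 2)
    (j₀ : ℕ) (hj₀ : 1 ≤ j₀) (hclose : |c j₀ - x₀| < δ)
    (n : ℕ) (hn₁ : j₀ ≤ n) (hn₂ : n ≤ j₀ + m) :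
    |∑ k ∈ Finset.Icc 1 n, φ (c k)| ≥
      ((n : ℝ) - j₀ + 1) - L / (2 * (1 - 1 / Λ)) -
        |∑ k ∈ Finset.Icc 1 (j₀ - 1), φ (c k)| := by
  lift Λ to ℝ≥0 using by linarith
  lift L to ℝ≥0 using by simpa using (abs_nonneg _).trans (hφ 1 0)
  have hfLip : LipschitzWith Λ f := .of_dist_le_mul hf
  have hφLip : LipschitzWith L φ := .of_dist_le_mul hφ
  have main := stmt_2_general (mod_cast hΛ) hfLip hφLip x₀
    (fun k hk ↦ hc k (hj₀.trans hk)) hclose.le hδm hj₀ (n := n + 1) (by lia) (by lia)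
  have hsteps : ((n + 1 - j₀ : ℕ) : ℝ) = n - j₀ + 1 := by
    rw [Nat.cast_sub (by lia)]
    push_cast
    ring
  have hlength : ‖birkhoffSum f φ (n + 1 - j₀) x₀‖ = n - j₀ + 1 := by
    rw [IsFixedPt.birkhoffSum_eq hfix, hφx₀, nsmul_one, Real.norm_natCast, hsteps]
  rwa [hlength, mul_one_div, div_div, Ico_add_one_right_eq_Icc,
    ← Icc_sub_one_right_eq_Ico_of_not_isMin (not_isMin_of_lt hj₀)] at main
end

section
/- Let f : ℝ → ℝ satisfy |f(x) − f(y)| ≤ Λ·|x − y| for all x, y, where Λ > 1, let x₀ be a fixed point of f, and let (c_k)_{k≥1} be a sequence with c_{k+1} = f(c_k) for all k ≥ 1. Let φ : ℝ → ℝ be Lipschitz with φ(x₀) = 1. If x₀ lies in the closure of the set {c_k : k ≥ 1}, then the sequence of Birkhoff sums (Σ_{k=1}^{n} φ(c_k))_{n≥1} is unbounded, i.e. for every D there exists n with |Σ_{k=1}^{n} φ(c_k)| > D. -/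
/-!
At the fixed point `x₀` the Birkhoff sum over `m` steps is `m • φ x₀`, whose norm is arbitrarily
large. For fixed `m` the Birkhoff sum is continuous at `x₀`, so its norm is just as large at some
point of the orbit close to `x₀`. A Birkhoff sum started at a point of the orbit is the difference
of two Birkhoff sums started at the initial point, so these cannot all be small.
-/

open Function Topology

section Orbit

variable {X M : Type*} {f : X → X} {c : ℕ → X}

theorem add_one_eq_iterate_of_forall_succ_eq (hc : ∀ k, 1 ≤ k → c (k + 1) = f (c k)) (k : ℕ) :
    c (k + 1) = f^[k] (c 1) := by
  induction k with
  | zero => rfl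
  | succ k ih => rw [hc (k + 1) k.succ_pos, ih, iterate_succ_apply']

theorem sum_Icc_one_eq_birkhoffSum [AddCommMonoid M] (hc : ∀ k, 1 ≤ k → c (k + 1) = f (c k))
    (φ : X → M) (n : ℕ) : ∑ k ∈ Finset.Icc 1 n, φ (c k) = birkhoffSum f φ n (c 1) := by
  induction n with
  | zero => simp
  | succ n ih =>
    rw [Finset.sum_Icc_succ_top n.succ_pos, birkhoffSum_succ, ih,
      add_one_eq_iterate_of_forall_succ_eq hc n]

end Orbit

theorem birkhoffSum_iterate_apply {X G : Type*} [AddCommGroup G] (f : X → X) (φ : X → G)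
    (m k : ℕ) (x : X) :
    birkhoffSum f φ m (f^[k] x) = birkhoffSum f φ (k + m) x - birkhoffSum f φ k x :=
  eq_sub_of_add_eq' (birkhoffSum_add f φ k m x).symm

section FixedPoint

variable {X M E : Type*} [TopologicalSpace X] {f : X → X} {x₀ : X}

theorem continuousAt_birkhoffSum [AddCommMonoid M] [TopologicalSpace M] [ContinuousAdd M]
    {φ : X → M} (hf : ContinuousAt f x₀) (hfix : IsFixedPt f x₀) (hφ : ContinuousAt φ x₀) (n : ℕ) :
    ContinuousAt (birkhoffSum f φ n) x₀ :=
  tendsto_finsetSum _ fun k _ ↦ hφ.comp_of_eq (hf.iterate hfix k) (hfix.iterate k)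

variable [NormedAddCommGroup E] [NormedSpace ℝ E] {φ : X → E}

theorem exists_eventually_lt_norm_birkhoffSum (hf : ContinuousAt f x₀) (hfix : IsFixedPt f x₀)
    (hφ : ContinuousAt φ x₀) (hφx₀ : φ x₀ ≠ 0) (D : ℝ) :
    ∃ m, ∀ᶠ y in 𝓝 x₀, D < ‖birkhoffSum f φ m y‖ := by
  obtain ⟨m, hm⟩ := exists_lt_nsmul (norm_pos_iff.mpr hφx₀) D
  have hlarge : D < ‖birkhoffSum f φ m x₀‖ := by
    rwa [hfix.birkhoffSum_eq, RCLike.norm_nsmul ℝ]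
  exact ⟨m, (continuousAt_birkhoffSum hf hfix hφ m).norm.eventually_const_lt hlarge⟩

theorem exists_lt_norm_birkhoffSum_of_mem_closure (hf : ContinuousAt f x₀) (hfix : IsFixedPt f x₀)
    (hφ : ContinuousAt φ x₀) (hφx₀ : φ x₀ ≠ 0) {x : X}
    (hx : x₀ ∈ closure (Set.range fun k ↦ f^[k] x)) (D : ℝ) :
    ∃ n, D < ‖birkhoffSum f φ n x‖ := by
  by_contra! hbdd
  obtain ⟨m, hm⟩ := exists_eventually_lt_norm_birkhoffSum hf hfix hφ hφx₀ (D + D)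
  obtain ⟨_, ⟨k, rfl⟩, hlarge⟩ := ((mem_closure_iff_frequently.mp hx).and_eventually hm).exists
  refine hlarge.not_ge ?_
  calc ‖birkhoffSum f φ m (f^[k] x)‖
      = ‖birkhoffSum f φ (k + m) x - birkhoffSum f φ k x‖ := by rw [birkhoffSum_iterate_apply]
    _ ≤ D + D := norm_sub_le_of_le (hbdd (k + m)) (hbdd k)

theorem stmt_3_general (hf : ContinuousAt f x₀) (hfix : IsFixedPt f x₀)
    {c : ℕ → X} (hc : ∀ k, 1 ≤ k → c (k + 1) = f (c k))
    (hφ : ContinuousAt φ x₀) (hφx₀ : φ x₀ ≠ 0)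
    (hdense : x₀ ∈ closure {x | ∃ k, 1 ≤ k ∧ c k = x}) (D : ℝ) :
    ∃ n, 1 ≤ n ∧ D < ‖∑ k ∈ Finset.Icc 1 n, φ (c k)‖ := by
  have horbit : {x | ∃ k, 1 ≤ k ∧ c k = x} ⊆ Set.range fun k ↦ f^[k] (c 1) := by
    rintro _ ⟨k, hk, rfl⟩
    obtain ⟨i, rfl⟩ := Nat.exists_eq_add_of_le' hk
    exact ⟨i, (add_one_eq_iterate_of_forall_succ_eq hc i).symm⟩
  obtain ⟨n, hn⟩ := exists_lt_norm_birkhoffSum_of_mem_closure hf hfix hφ hφx₀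
    (closure_mono horbit hdense) (max D 0)
  obtain ⟨hD, hpos⟩ := max_lt_iff.mp hn
  have hn_ne : n ≠ 0 := by
    rintro rfl
    simp at hpos
  exact ⟨n, Nat.one_le_iff_ne_zero.mpr hn_ne, by rwa [sum_Icc_one_eq_birkhoffSum hc]⟩

end FixedPoint

/-- If `φ` is Lipschitz with `φ x₀ = 1` at a fixed point `x₀` of `f` lying in
the closure of the orbit `{c k : k ≥ 1}`, then the Birkhoff sums of `φ` along
the orbit are unbounded. -/
theorem stmt_3 (f : ℝ → ℝ) (Λ : ℝ) (hΛ : 1 < Λ)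
    (hf : ∀ x y : ℝ, |f x - f y| ≤ Λ * |x - y|)
    (x₀ : ℝ) (hfix : f x₀ = x₀)
    (c : ℕ → ℝ) (hc : ∀ k, 1 ≤ k → c (k + 1) = f (c k))
    (φ : ℝ → ℝ) (L : ℝ) (hφ : ∀ x y : ℝ, |φ x - φ y| ≤ L * |x - y|)
    (hφx₀ : φ x₀ = 1)
    (hdense : x₀ ∈ closure {x : ℝ | ∃ k, 1 ≤ k ∧ c k = x}) :
    ∀ D : ℝ, ∃ n : ℕ, 1 ≤ n ∧ |∑ k ∈ Finset.Icc 1 n, φ (c k)| > D :=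
  stmt_3_general (LipschitzWith.of_dist_le' hf).continuous.continuousAt hfix hc
    (LipschitzWith.of_dist_le' hφ).continuous.continuousAt (hφx₀ ▸ one_ne_zero) hdense
end
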